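/- arXiv:2407.07738 — 7 statements merged into one kernel-verified Lean document; each statement's English description precedes it below -/
import Mathlib

section
/- Let I ⊆ ℝ be an open interval, a : I → ℝ² a smooth curve, μ : I → ℝ² a smooth map and β : I → ℝ a smooth function with a'(t) = β(t)μ(t) for all t ∈ I, and let r : I → ℝ be a smooth positive function. Suppose there exists a smooth map ν̃ : I → ℝ² with ⟨ν̃(t), ν̃(t)⟩ = 1 and r'(t) + β(t)⟨ν̃(t), μ(t)⟩ = 0 for all t ∈ I. Then the map f : I → ℝ² defined by f(t) = a(t) + r(t)ν̃(t) is an envelope of the pseudo-circle family C(a(t), r(t)): for every t ∈ I, ⟨f(t) - a(t), f(t) - a(t)⟩ = r(t)² and ⟨f'(t), f(t) - a(t)⟩ = 0. -/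
/-!
Write `n` for the unit field. Since `f - a = r • n`, the incidence condition is `⟨n, n⟩ = 1` scaled
by `r ^ 2`. For the tangency condition, `f' = β • μ + r • n' + r' • n`, so
`⟨f', r • n⟩ = r * (β * ⟨n, μ⟩ + r * ⟨n', n⟩ + r')`; the middle term vanishes because `⟨n, n⟩` is
constant (`mink_deriv_self_eq_zero`), and the other two cancel by the creative condition.
-/

open Real Set

noncomputable def mink (x y : ℝ × ℝ) : ℝ := -(x.1 * y.1) + x.2 * y.2

/-- `f` is an envelope of the pseudo-circle family `C(a(t), +r(t))` on `I`. -/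
def IsEnvelopePos (I : Set ℝ) (a : ℝ → ℝ × ℝ) (r : ℝ → ℝ) (f : ℝ → ℝ × ℝ) : Prop :=
  ContDiffOn ℝ (⊤ : ℕ∞) f I ∧
    ∀ t ∈ I, mink (f t - a t) (f t - a t) = (r t) ^ 2 ∧ mink (deriv f t) (f t - a t) = 0

/-- A vector field of constant pseudo-length `1` on an open set is pseudo-orthogonal to its
derivative, as one sees by differentiating `⟨n, n⟩ = 1`. -/
theorem mink_deriv_self_eq_zero {I : Set ℝ} (hI : IsOpen I) {n : ℝ → ℝ × ℝ}
    (hunit : ∀ t ∈ I, mink (n t) (n t) = 1) {t : ℝ} (ht : t ∈ I) {n' : ℝ × ℝ}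
    (hn : HasDerivAt n n' t) : mink n' (n t) = 0 := by
  have h1 : HasDerivAt (fun s => (n s).1) n'.1 t :=
    (ContinuousLinearMap.fst ℝ ℝ ℝ).hasFDerivAt.comp_hasDerivAt t hn
  have h2 : HasDerivAt (fun s => (n s).2) n'.2 t :=
    (ContinuousLinearMap.snd ℝ ℝ ℝ).hasFDerivAt.comp_hasDerivAt t hn
  have h : HasDerivAt (fun s => mink (n s) (n s)) _ t := ((h1.mul h1).neg).add (h2.mul h2)
  have hc : HasDerivAt (fun s => mink (n s) (n s)) 0 t :=
    (hasDerivAt_const t (1 : ℝ)).congr_of_eventuallyEq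
      (Filter.eventually_of_mem (hI.mem_nhds ht) hunit)
  have := h.unique hc
  unfold mink
  linarith

theorem creative_implies_envelope_pos
    (I : Set ℝ) (hIopen : IsOpen I) (hIconn : I.OrdConnected)
    (a μ ν' : ℝ → ℝ × ℝ) (β r : ℝ → ℝ)
    (hs0 : ContDiffOn ℝ (⊤ : ℕ∞) a I)
    (hs1 : ContDiffOn ℝ (⊤ : ℕ∞) μ I)
    (hs2 : ContDiffOn ℝ (⊤ : ℕ∞) β I)
    (hs3 : ContDiffOn ℝ (⊤ : ℕ∞) r I)
    (hderiv : ∀ t ∈ I, deriv a t = β t • μ t)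
    (hrpos : ∀ t ∈ I, 0 < r t)
    (hsν' : ContDiffOn ℝ (⊤ : ℕ∞) ν' I)
    (hunit : ∀ t ∈ I, mink (ν' t) (ν' t) = 1)
    (hcreative : ∀ t ∈ I, deriv r t + β t * mink (ν' t) (μ t) = 0) :
    IsEnvelopePos I a r (fun t => a t + r t • ν' t) := by
  have hsmooth {F : Type} [NormedAddCommGroup F] [NormedSpace ℝ F] {g : ℝ → F}
      (hg : ContDiffOn ℝ (⊤ : ℕ∞) g I) {t : ℝ} (ht : t ∈ I) : HasDerivAt g (deriv g t) t :=
    ((hg.contDiffAt (hIopen.mem_nhds ht)).differentiableAt (by simp)).hasDerivAt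
  refine ⟨hs0.add (hs3.smul hsν'), fun t ht => ⟨?_, ?_⟩⟩
  · have hu := hunit t ht
    simp only [mink, add_sub_cancel_left, Prod.smul_fst, Prod.smul_snd, smul_eq_mul] at hu ⊢
    linear_combination (r t) ^ 2 * hu
  · have hν := hsmooth hsν' ht
    have hf : HasDerivAt (fun s => a s + r s • ν' s) _ t :=
      (hsmooth hs0 ht).add ((hsmooth hs3 ht).smul hν)
    have hu := hunit t ht
    have hc := hcreative t ht
    have ho := mink_deriv_self_eq_zero hIopen hunit ht hν
    rw [hf.deriv, hderiv t ht]
    simp only [mink, add_sub_cancel_left, Prod.fst_add, Prod.snd_add, Prod.smul_fst,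
      Prod.smul_snd, smul_eq_mul] at hu hc ho ⊢
    linear_combination (r t) ^ 2 * ho + r t * deriv r t * hu + r t * hc
end

section
/- Let I ⊆ ℝ be an open interval, a : I → ℝ² a smooth curve, μ : I → ℝ² a smooth map and β : I → ℝ a smooth function with a'(t) = β(t)μ(t) for all t ∈ I, and let r : I → ℝ be a smooth positive function. Suppose there exists a smooth map ν̃ : I → ℝ² with ⟨ν̃(t), ν̃(t)⟩ = -1 and r'(t) - β(t)⟨ν̃(t), μ(t)⟩ = 0 for all t ∈ I. Then the map f : I → ℝ² defined by f(t) = a(t) + r(t)ν̃(t) is an envelope of the pseudo-circle family C(a(t), -r(t)): for every t ∈ I, ⟨f(t) - a(t), f(t) - a(t)⟩ = -r(t)² and ⟨f'(t), f(t) - a(t)⟩ = 0. -/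
/-!
Write `⟨x, y⟩` for `mink x y`; here `ν'` is a vector field, not a derivative, and `(ν')'` is its
derivative. As `⟨ν', ν'⟩ = -1`, the first envelope equation for `f = a + r ν'` is immediate.
For the second, `f' = β μ + r' ν' + r (ν')'`, so pairing with `f - a = r ν'` gives
`r (β ⟨μ, ν'⟩ - r' + r ⟨(ν')', ν'⟩)`. The last term vanishes because `⟨ν', ν'⟩` is constant
(`mink_deriv_self_eq_zero`), and the rest vanishes by the creative condition.
-/

open Real Set

/-- `f` is an envelope of the pseudo-circle family `C(a(t), -r(t))` on `I`. -/
def IsEnvelopeNeg (I : Set ℝ) (a : ℝ → ℝ × ℝ) (r : ℝ → ℝ) (f : ℝ → ℝ × ℝ) : Prop :=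
  ContDiffOn ℝ (⊤ : ℕ∞) f I ∧
    ∀ t ∈ I, mink (f t - a t) (f t - a t) = -((r t) ^ 2) ∧ mink (deriv f t) (f t - a t) = 0

/-- A curve of constant `mink v v` is `mink`-orthogonal to its velocity. -/
theorem mink_deriv_self_eq_zero_s1 {I : Set ℝ} (hI : IsOpen I) {v : ℝ → ℝ × ℝ} {v' : ℝ × ℝ} {c t : ℝ}
    (ht : t ∈ I) (hv : HasDerivAt v v' t) (hc : ∀ s ∈ I, mink (v s) (v s) = c) :
    mink v' (v t) = 0 := by
  have h1 : HasDerivAt (fun s => (v s).1) v'.1 t := hv.fst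
  have h2 : HasDerivAt (fun s => (v s).2) v'.2 t := hv.snd
  have h := (h1.mul h1).neg.add (h2.mul h2)
  have hconst : HasDerivAt (fun s => mink (v s) (v s)) 0 t :=
    (hasDerivAt_const t c).congr_of_eventuallyEq
      (Filter.eventually_of_mem (hI.mem_nhds ht) hc)
  have := hconst.unique h
  simp only [mink]
  linarith

theorem creative_implies_envelope_neg
    (I : Set ℝ) (hIopen : IsOpen I) (hIconn : I.OrdConnected)
    (a μ ν' : ℝ → ℝ × ℝ) (β r : ℝ → ℝ)
    (hs0 : ContDiffOn ℝ (⊤ : ℕ∞) a I)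
    (hs1 : ContDiffOn ℝ (⊤ : ℕ∞) μ I)
    (hs2 : ContDiffOn ℝ (⊤ : ℕ∞) β I)
    (hs3 : ContDiffOn ℝ (⊤ : ℕ∞) r I)
    (hderiv : ∀ t ∈ I, deriv a t = β t • μ t)
    (hrpos : ∀ t ∈ I, 0 < r t)
    (hsν' : ContDiffOn ℝ (⊤ : ℕ∞) ν' I)
    (hunit : ∀ t ∈ I, mink (ν' t) (ν' t) = -1)
    (hcreative : ∀ t ∈ I, deriv r t - β t * mink (ν' t) (μ t) = 0) :
    IsEnvelopeNeg I a r (fun t => a t + r t • ν' t) := by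
  have hne : ((⊤ : ℕ∞) : WithTop ℕ∞) ≠ 0 := by simp
  refine ⟨hs0.add (hs3.smul hsν'), fun t ht => ?_⟩
  have hI := hIopen.mem_nhds ht
  have ha := ((hs0.contDiffAt hI).differentiableAt hne).hasDerivAt
  have hr := ((hs3.contDiffAt hI).differentiableAt hne).hasDerivAt
  have hν := ((hsν'.contDiffAt hI).differentiableAt hne).hasDerivAt
  have hf : deriv (fun t => a t + r t • ν' t) t
      = deriv a t + (r t • deriv ν' t + deriv r t • ν' t) := (ha.add (hr.smul hν)).deriv
  have hu := hunit t ht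
  have hc := hcreative t ht
  have ho := mink_deriv_self_eq_zero_s1 hIopen ht hν hunit
  rw [hf, hderiv t ht]
  simp only [mink, add_sub_cancel_left, Prod.fst_add, Prod.snd_add, Prod.smul_fst, Prod.smul_snd,
    smul_eq_mul] at hu hc ho ⊢
  constructor
  · linear_combination (r t) ^ 2 * hu
  · linear_combination r t * deriv r t * hu - r t * hc + (r t) ^ 2 * ho
end

section
/- Let I ⊆ ℝ be an open interval, a : I → ℝ² a smooth curve, μ : I → ℝ² a smooth map and β : I → ℝ a smooth function with a'(t) = β(t)μ(t) for all t ∈ I, and let r : I → ℝ be a smooth positive function. Suppose f : I → ℝ² is an envelope of the pseudo-circle family C(a(t), r(t)), i.e. f is smooth and for every t ∈ I, ⟨f(t) - a(t), f(t) - a(t)⟩ = r(t)² and ⟨f'(t), f(t) - a(t)⟩ = 0. Then the map ν̃ : I → ℝ² defined by ν̃(t) = (f(t) - a(t))/r(t) is smooth and satisfies ⟨ν̃(t), ν̃(t)⟩ = 1 and r'(t) + β(t)⟨ν̃(t), μ(t)⟩ = 0 for all t ∈ I; in particular the family C(a(t), r(t)) is creative. -/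
/-!
Differentiating `⟨f - a, f - a⟩ = r²` gives `⟨f' - a', f - a⟩ = r r'`. The tangency condition
`⟨f', f - a⟩ = 0` and `a' = β μ` turn this into `r r' + β ⟨f - a, μ⟩ = 0`, and dividing by `r > 0`
yields the creative condition for `(f - a) / r`.
-/

open Real Set

/-- Product rule for the pseudo-scalar square of a curve. -/
theorem hasDerivAt_mink_self {w : ℝ → ℝ × ℝ} {w' : ℝ × ℝ} {t : ℝ} (hw : HasDerivAt w w' t) :
    HasDerivAt (fun s => mink (w s) (w s)) (2 * mink w' (w t)) t := by
  have h1 : HasDerivAt (fun s => (w s).1) w'.1 t := hw.fst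
  have h2 : HasDerivAt (fun s => (w s).2) w'.2 t := hw.snd
  refine ((h1.mul h1).neg.add (h2.mul h2)).congr_deriv ?_
  simp only [mink]
  ring

theorem envelope_implies_creative_pos
    (I : Set ℝ) (hIopen : IsOpen I) (hIconn : I.OrdConnected)
    (a μ : ℝ → ℝ × ℝ) (β r : ℝ → ℝ)
    (hs0 : ContDiffOn ℝ (⊤ : ℕ∞) a I)
    (hs1 : ContDiffOn ℝ (⊤ : ℕ∞) μ I)
    (hs2 : ContDiffOn ℝ (⊤ : ℕ∞) β I)
    (hs3 : ContDiffOn ℝ (⊤ : ℕ∞) r I)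
    (hderiv : ∀ t ∈ I, deriv a t = β t • μ t)
    (hrpos : ∀ t ∈ I, 0 < r t)
    (f : ℝ → ℝ × ℝ)
    (hf : IsEnvelopePos I a r f) :
    ContDiffOn ℝ (⊤ : ℕ∞) (fun t => (r t)⁻¹ • (f t - a t)) I ∧
      ∀ t ∈ I,
        mink ((r t)⁻¹ • (f t - a t)) ((r t)⁻¹ • (f t - a t)) = 1 ∧
        deriv r t + β t * mink ((r t)⁻¹ • (f t - a t)) (μ t) = 0 := by
  obtain ⟨hfs, henv⟩ := hf
  refine ⟨(hs3.inv fun t ht => (hrpos t ht).ne').smul (hfs.sub hs0), fun t ht => ?_⟩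
  have hr : r t ≠ 0 := (hrpos t ht).ne'
  have hI : I ∈ nhds t := hIopen.mem_nhds ht
  obtain ⟨hcirc, htan⟩ := henv t ht
  have hda : HasDerivAt a (β t • μ t) t := by
    rw [← hderiv t ht]
    exact ((hs0.contDiffAt hI).differentiableAt (by simp)).hasDerivAt
  have hdf : HasDerivAt f (deriv f t) t :=
    ((hfs.contDiffAt hI).differentiableAt (by simp)).hasDerivAt
  have hdr : HasDerivAt r (deriv r t) t :=
    ((hs3.contDiffAt hI).differentiableAt (by simp)).hasDerivAt
  have hsq : HasDerivAt (fun s => (r s) ^ 2) (2 * mink (deriv f t - β t • μ t) (f t - a t)) t :=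
    (hasDerivAt_mink_self (hdf.sub hda)).congr_of_eventuallyEq
      (Filter.eventually_of_mem hI fun s hs => (henv s hs).1.symm)
  have hkey := hsq.unique (hdr.pow 2)
  simp only [mink, Prod.fst_sub, Prod.snd_sub, Prod.smul_fst, Prod.smul_snd, smul_eq_mul]
    at hcirc htan hkey ⊢
  norm_num at hkey
  constructor
  · field_simp
    linear_combination hcirc
  · field_simp
    linear_combination htan - hkey / 2
end

section
/- Let I ⊆ ℝ be an open interval, a : I → ℝ² a smooth curve, μ : I → ℝ² a smooth map and β : I → ℝ a smooth function with a'(t) = β(t)μ(t) for all t ∈ I, and let r : I → ℝ be a smooth positive function. Suppose f : I → ℝ² is an envelope of the pseudo-circle family C(a(t), -r(t)), i.e. f is smooth and for every t ∈ I, ⟨f(t) - a(t), f(t) - a(t)⟩ = -r(t)² and ⟨f'(t), f(t) - a(t)⟩ = 0. Then the map ν̃ : I → ℝ² defined by ν̃(t) = (f(t) - a(t))/r(t) is smooth and satisfies ⟨ν̃(t), ν̃(t)⟩ = -1 and r'(t) - β(t)⟨ν̃(t), μ(t)⟩ = 0 for all t ∈ I; in particular the family C(a(t), -r(t)) is creative.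 -/
open Real Set

/-!
Write `ν̃ = (f - a) / r`. Its pseudo-norm `-1` is the equation of the pseudo-circle divided by `r²`.
Since `I` is open, the identity `⟨f - a, f - a⟩ = -r²` can be differentiated at each point of `I`
(`HasDerivAt.mink_self`), which gives `2 ⟨f' - a', f - a⟩ = -2 r r'`. The envelope condition removes
`⟨f', f - a⟩`, and `a' = β μ` leaves `β ⟨μ, f - a⟩ = r r'`; dividing by `r > 0` gives
`r' = β ⟨ν̃, μ⟩`.
-/

theorem HasDerivAt.mink_self {g : ℝ → ℝ × ℝ} {g' : ℝ × ℝ} {t : ℝ} (hg : HasDerivAt g g' t) :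
    HasDerivAt (fun s => mink (g s) (g s)) (2 * mink g' (g t)) t := by
  have h1 : HasDerivAt (fun s => (g s).1) g'.1 t :=
    (ContinuousLinearMap.fst ℝ ℝ ℝ).hasFDerivAt.comp_hasDerivAt t hg
  have h2 : HasDerivAt (fun s => (g s).2) g'.2 t :=
    (ContinuousLinearMap.snd ℝ ℝ ℝ).hasFDerivAt.comp_hasDerivAt t hg
  refine ((h1.mul h1).neg.add (h2.mul h2)).congr_deriv ?_
  simp only [mink]
  ring

theorem envelope_implies_creative_neg
    (I : Set ℝ) (hIopen : IsOpen I) (hIconn : I.OrdConnected)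
    (a μ : ℝ → ℝ × ℝ) (β r : ℝ → ℝ)
    (hs0 : ContDiffOn ℝ (⊤ : ℕ∞) a I)
    (hs1 : ContDiffOn ℝ (⊤ : ℕ∞) μ I)
    (hs2 : ContDiffOn ℝ (⊤ : ℕ∞) β I)
    (hs3 : ContDiffOn ℝ (⊤ : ℕ∞) r I)
    (hderiv : ∀ t ∈ I, deriv a t = β t • μ t)
    (hrpos : ∀ t ∈ I, 0 < r t)
    (f : ℝ → ℝ × ℝ)
    (hf : IsEnvelopeNeg I a r f) :
    ContDiffOn ℝ (⊤ : ℕ∞) (fun t => (r t)⁻¹ • (f t - a t)) I ∧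
      ∀ t ∈ I,
        mink ((r t)⁻¹ • (f t - a t)) ((r t)⁻¹ • (f t - a t)) = -1 ∧
        deriv r t - β t * mink ((r t)⁻¹ • (f t - a t)) (μ t) = 0 := by
  obtain ⟨hfs, hfe⟩ := hf
  refine ⟨(hs3.inv fun t ht => (hrpos t ht).ne').smul (hfs.sub hs0), fun t ht => ?_⟩
  have hr : r t ≠ 0 := (hrpos t ht).ne'
  have hI : I ∈ nhds t := hIopen.mem_nhds ht
  obtain ⟨hcirc, htan⟩ := hfe t ht
  have hda : HasDerivAt a (β t • μ t) t := by
    rw [← hderiv t ht]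
    exact ((hs0.contDiffAt hI).differentiableAt (by simp)).hasDerivAt
  have hdf := ((hfs.contDiffAt hI).differentiableAt (by simp)).hasDerivAt
  have hdr := ((hs3.contDiffAt hI).differentiableAt (by simp)).hasDerivAt
  have hL := (hdf.sub hda).mink_self
  have hR : HasDerivAt (fun s => -((r s) ^ 2)) (-(2 * r t * deriv r t)) t :=
    (hdr.pow 2).neg.congr_deriv (by simp)
  -- Both sides of the circle equation agree near `t`, so their derivatives at `t` coincide.
  have key := hL.unique (hR.congr_of_eventuallyEq
    (Filter.eventually_of_mem hI fun s hs => (hfe s hs).1))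
  simp only [mink, Pi.sub_apply, Prod.fst_sub, Prod.snd_sub, Prod.smul_fst, Prod.smul_snd,
    smul_eq_mul] at hcirc htan key ⊢
  constructor
  · field_simp
    linarith
  · field_simp
    linarith
end

section
/- Let I ⊆ ℝ be an open interval and let a : I → ℝ² be a smooth timelike frontal with frame: smooth maps ν, μ : I → ℝ² and a smooth function β : I → ℝ such that ⟨ν, ν⟩ ≡ 1, ⟨μ, μ⟩ ≡ -1, ⟨μ, ν⟩ ≡ 0 and a'(t) = β(t)μ(t) for all t ∈ I. Let r : I → ℝ be a positive constant function. If a is not a point, i.e. there exists t₀ ∈ I with β(t₀) ≠ 0, then the pseudo-circle family C(a(t), -r(t)) does not create an envelope: there is no smooth map f : I → ℝ² such that for every t ∈ I, ⟨f(t) - a(t), f(t) - a(t)⟩ = -r(t)² and ⟨f'(t), f(t) - a(t)⟩ = 0. -/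
/-!
Put `w = f - a`. Since `⟨w, w⟩ = -c²` is constant, `⟨f' - a', w⟩ = 0`, and together with
`⟨f', w⟩ = 0` this gives `⟨a', w⟩ = β ⟨μ, w⟩ = 0`. At a point where `β ≠ 0`, the timelike vectors
`μ` and `w` are therefore orthogonal, which is impossible in the Minkowski plane
(`mink_ne_zero_of_timelike`).
-/

open Real Set

theorem mink_ne_zero_of_timelike {u w : ℝ × ℝ} (hu : mink u u < 0) (hw : mink w w < 0) :
    mink u w ≠ 0 := by
  intro h
  simp only [mink] at hu hw h
  -- Reversed Cauchy-Schwarz: `⟨u, w⟩² = ⟨u, u⟩⟨w, w⟩ + (u₁w₂ - u₂w₁)²`.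
  nlinarith [mul_pos_of_neg_of_neg hu hw, sq_nonneg (u.1 * w.2 - u.2 * w.1),
    congrArg (fun z : ℝ => z ^ 2) h]

theorem mink_deriv_eq_zero {w : ℝ → ℝ × ℝ} {w' : ℝ × ℝ} {t k : ℝ} (hw : HasDerivAt w w' t)
    (hk : ∀ᶠ s in nhds t, mink (w s) (w s) = k) : mink w' (w t) = 0 := by
  have h1 : HasDerivAt (fun s => (w s).1) w'.1 t := hw.fst
  have h2 : HasDerivAt (fun s => (w s).2) w'.2 t := hw.snd
  have hd : HasDerivAt (fun s => mink (w s) (w s)) _ t := ((h1.mul h1).neg).add (h2.mul h2)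
  have hz : HasDerivAt (fun s => mink (w s) (w s)) 0 t :=
    (hasDerivAt_const t k).congr_of_eventuallyEq hk
  have := hd.unique hz
  simp only [mink]
  linarith

theorem constant_radius_timelike_no_envelope
    (I : Set ℝ) (hIopen : IsOpen I) (hIconn : I.OrdConnected)
    (a ν μ : ℝ → ℝ × ℝ) (β : ℝ → ℝ)
    (hs0 : ContDiffOn ℝ (⊤ : ℕ∞) a I)
    (hs1 : ContDiffOn ℝ (⊤ : ℕ∞) ν I)
    (hs2 : ContDiffOn ℝ (⊤ : ℕ∞) μ I)
    (hs3 : ContDiffOn ℝ (⊤ : ℕ∞) β I)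
    (hνν : ∀ t ∈ I, mink (ν t) (ν t) = 1)
    (hμμ : ∀ t ∈ I, mink (μ t) (μ t) = -1)
    (hμν : ∀ t ∈ I, mink (μ t) (ν t) = 0)
    (hderiv : ∀ t ∈ I, deriv a t = β t • μ t)
    (r : ℝ → ℝ) (c : ℝ) (hc : 0 < c) (hrconst : ∀ t, r t = c)
    (t₀ : ℝ) (ht₀ : t₀ ∈ I) (hβt₀ : β t₀ ≠ 0) :
    ¬ ∃ f : ℝ → ℝ × ℝ, IsEnvelopeNeg I a r f := by
  rintro ⟨f, hf, hE⟩
  have hI : I ∈ nhds t₀ := hIopen.mem_nhds ht₀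
  have hfd := ((hf.contDiffAt hI).differentiableAt (by simp)).hasDerivAt
  have had := ((hs0.contDiffAt hI).differentiableAt (by simp)).hasDerivAt
  have hw : mink (deriv f t₀ - deriv a t₀) (f t₀ - a t₀) = 0 :=
    mink_deriv_eq_zero (w := fun s => f s - a s) (k := -c ^ 2) (hfd.sub had) (by
      filter_upwards [hI] with s hs
      rw [(hE s hs).1, hrconst])
  obtain ⟨h1, h2⟩ := hE t₀ ht₀
  rw [hrconst] at h1
  refine mink_ne_zero_of_timelike (u := μ t₀) (w := f t₀ - a t₀)
    (by rw [hμμ t₀ ht₀]; norm_num) (by rw [h1]; nlinarith) ?_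
  refine (mul_eq_zero.mp ?_).resolve_left hβt₀
  rw [hderiv t₀ ht₀] at hw
  simp only [mink, Prod.fst_sub, Prod.snd_sub, Prod.smul_fst, Prod.smul_snd, smul_eq_mul]
    at hw h2 ⊢
  linarith
end

section
/- Let I ⊆ ℝ be an open interval, a : I → ℝ² a smooth spacelike frontal with frame ν, μ : I → ℝ² (smooth, ⟨ν, ν⟩ ≡ -1, ⟨μ, μ⟩ ≡ 1, ⟨μ, ν⟩ ≡ 0) and smooth β : I → ℝ with a'(t) = β(t)μ(t), and r : I → ℝ a smooth positive function. Suppose the pseudo-circle family C(a(t), r(t)) creates at least one envelope. Then the set of envelopes of C(a(t), r(t)) is a singleton (the family creates a unique envelope) if and only if the set {t ∈ I : β(t) ≠ 0 and |r'(t)| = |β(t)|} is dense in I. -/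
/-!
Write an envelope as `f = a + x μ + y ν` in the moving frame. The circle equation reads
`x² - y² = r²`, and differentiating it turns the tangency condition `⟨f', f - a⟩ = 0` into
`β x = -r r'` (`tangency_iff`). Thus envelopes are exactly pairs of smooth functions `x`, `y` with
`x² - y² = r²` and `β x = -r r'` (`IsEnvelopePos.coord_eqs`, `isEnvelopePos_of_coords`).

Where `β ≠ 0` and `|r'| = |β|` these equations force `x = -r r' / β` and `y = 0`, so if such points
are dense the envelope is unique by continuity. Conversely, if the envelope is unique, it is
invariant under `y ↦ -y`, so `y = 0`, `x² = r²` and `|r'| = |β|` everywhere. Were the set not dense,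
`β` and `r'` would vanish on a nonempty open set, and there `y` could be replaced by a bump function
`φ` and `x` by `(x / r) √(r² + φ²)`, giving a second envelope.
-/

open Real Set

/-- The set of envelopes of the family `C(a(t), +r(t))`, regarded as maps `I → ℝ²`. -/
def EnvSetPos (I : Set ℝ) (a : ℝ → ℝ × ℝ) (r : ℝ → ℝ) : Set (I → ℝ × ℝ) :=
  {g | ∃ f : ℝ → ℝ × ℝ, IsEnvelopePos I a r f ∧ g = I.restrict f}

/-- Expansion of a vector in a pseudo-orthonormal frame `m`, `n` of the Minkowski plane. -/
lemma mink_expansion {m n : ℝ × ℝ} (hn : mink n n = -1) (hm : mink m m = 1)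
    (hmn : mink m n = 0) (w : ℝ × ℝ) : w = mink m w • m + (-mink n w) • n := by
  obtain ⟨p, q⟩ := m
  obtain ⟨u, v⟩ := n
  obtain ⟨w₁, w₂⟩ := w
  simp only [mink] at hn hm hmn
  -- The determinant `d` of the frame has `d² = 1`, and `n` is `m` with swapped entries up to `-d`.
  have hd : (p * v - q * u) ^ 2 = 1 := by
    linear_combination (-(p * u) + q * v) * hmn - (-(p * p) + q * q) * hn + hm
  have hp : p * (p * v - q * u) = -v := by linear_combination -v * hm + q * hmn
  have hq : q * (p * v - q * u) = -u := by linear_combination -u * hm + p * hmn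
  generalize p * v - q * u = d at *
  have hu : u = -(q * d) := by linarith
  have hv : v = -(p * d) := by linarith
  subst hu hv
  ext
  · simp only [mink, Prod.smul_mk, smul_eq_mul, Prod.mk_add_mk]
    linear_combination (-w₁) * hm + (-w₁ * q ^ 2 + w₂ * p * q) * hd
  · simp only [mink, Prod.smul_mk, smul_eq_mul, Prod.mk_add_mk]
    linear_combination (-w₂) * hm + (w₂ * p ^ 2 - w₁ * p * q) * hd

lemma mink_frame {m n : ℝ × ℝ} (hn : mink n n = -1) (hm : mink m m = 1)
    (hmn : mink m n = 0) (x y : ℝ) :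
    mink (x • m + y • n) (x • m + y • n) = x ^ 2 - y ^ 2 ∧ mink m (x • m + y • n) = x ∧
      mink n (x • m + y • n) = -y := by
  simp only [mink, Prod.fst_add, Prod.snd_add, Prod.smul_fst, Prod.smul_snd, smul_eq_mul] at *
  refine ⟨?_, ?_, ?_⟩
  · linear_combination x ^ 2 * hm + y ^ 2 * hn + 2 * x * y * hmn
  · linear_combination x * hm + y * hmn
  · linear_combination y * hn + x * hmn

lemma ContDiffOn.mink_self_maps {I : Set ℝ} {u v : ℝ → ℝ × ℝ} (hu : ContDiffOn ℝ (⊤ : ℕ∞) u I)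
    (hv : ContDiffOn ℝ (⊤ : ℕ∞) v I) : ContDiffOn ℝ (⊤ : ℕ∞) (fun t => mink (u t) (v t)) I := by
  unfold mink
  exact ((hu.fst.mul hv.fst).neg).add (hu.snd.mul hv.snd)

lemma ContDiffOn.hasDerivAt_of_isOpen {E : Type*} [NormedAddCommGroup E] [NormedSpace ℝ E]
    {I : Set ℝ} (hI : IsOpen I) {u : ℝ → E} (hu : ContDiffOn ℝ (⊤ : ℕ∞) u I) {t : ℝ}
    (ht : t ∈ I) : HasDerivAt u (deriv u t) t :=
  ((hu.contDiffAt (hI.mem_nhds ht)).differentiableAt (by simp)).hasDerivAt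

/-- Along a curve on the pseudo-circles, tangency amounts to `β ⟨μ, f - a⟩ = -r r'`: differentiate
the circle equation. -/
lemma tangency_iff {I : Set ℝ} (hI : IsOpen I) {a μ f : ℝ → ℝ × ℝ} {β r : ℝ → ℝ}
    (ha : ContDiffOn ℝ (⊤ : ℕ∞) a I) (hr : ContDiffOn ℝ (⊤ : ℕ∞) r I)
    (hderiv : ∀ t ∈ I, deriv a t = β t • μ t) (hf : ContDiffOn ℝ (⊤ : ℕ∞) f I)
    (hc : ∀ t ∈ I, mink (f t - a t) (f t - a t) = (r t) ^ 2) {t : ℝ} (ht : t ∈ I) :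
    mink (deriv f t) (f t - a t) = 0 ↔ β t * mink (μ t) (f t - a t) = -(r t * deriv r t) := by
  have hw := (hf.hasDerivAt_of_isOpen hI ht).sub (ha.hasDerivAt_of_isOpen hI ht)
  rw [hderiv t ht] at hw
  have hw1 : HasDerivAt (fun s => (f s - a s).1) _ t := hasFDerivAt_fst.comp_hasDerivAt t hw
  have hw2 : HasDerivAt (fun s => (f s - a s).2) _ t := hasFDerivAt_snd.comp_hasDerivAt t hw
  have h1 := ((hw1.mul hw1).neg).add (hw2.mul hw2)
  have h2 := (hr.hasDerivAt_of_isOpen hI ht).pow 2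
  have h3 := (h2.congr_of_eventuallyEq (Filter.eventually_of_mem (hI.mem_nhds ht) hc)).unique h1
  simp [mink] at h3 ⊢
  constructor <;> intro h <;> linarith

/-- The frame coordinates `x = ⟨μ, f - a⟩`, `y = -⟨ν, f - a⟩` of an envelope. -/
lemma IsEnvelopePos.coord_eqs {I : Set ℝ} (hI : IsOpen I) {a ν μ f : ℝ → ℝ × ℝ} {β r : ℝ → ℝ}
    (ha : ContDiffOn ℝ (⊤ : ℕ∞) a I) (hr : ContDiffOn ℝ (⊤ : ℕ∞) r I)
    (hν : ContDiffOn ℝ (⊤ : ℕ∞) ν I) (hμ : ContDiffOn ℝ (⊤ : ℕ∞) μ I)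
    (hνν : ∀ t ∈ I, mink (ν t) (ν t) = -1)
    (hμμ : ∀ t ∈ I, mink (μ t) (μ t) = 1)
    (hμν : ∀ t ∈ I, mink (μ t) (ν t) = 0)
    (hderiv : ∀ t ∈ I, deriv a t = β t • μ t) (hf : IsEnvelopePos I a r f) :
    ∃ x y : ℝ → ℝ, ContDiffOn ℝ (⊤ : ℕ∞) x I ∧ ContDiffOn ℝ (⊤ : ℕ∞) y I ∧
      ∀ t ∈ I, f t = a t + (x t • μ t + y t • ν t) ∧ x t ^ 2 - y t ^ 2 = r t ^ 2 ∧
        β t * x t = -(r t * deriv r t) := by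
  refine ⟨fun t => mink (μ t) (f t - a t), fun t => -mink (ν t) (f t - a t),
    hμ.mink_self_maps (hf.1.sub ha), (hν.mink_self_maps (hf.1.sub ha)).neg, fun t ht => ?_⟩
  have he := mink_expansion (hνν t ht) (hμμ t ht) (hμν t ht) (f t - a t)
  refine ⟨by rw [← he]; abel, ?_, ?_⟩
  · rw [← (mink_frame (hνν t ht) (hμμ t ht) (hμν t ht) _ _).1, ← he]
    exact (hf.2 t ht).1
  · exact (tangency_iff hI ha hr hderiv hf.1 (fun s hs => (hf.2 s hs).1) ht).1 (hf.2 t ht).2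

lemma isEnvelopePos_of_coords {I : Set ℝ} (hI : IsOpen I) {a ν μ : ℝ → ℝ × ℝ} {β r x y : ℝ → ℝ}
    (ha : ContDiffOn ℝ (⊤ : ℕ∞) a I) (hr : ContDiffOn ℝ (⊤ : ℕ∞) r I)
    (hν : ContDiffOn ℝ (⊤ : ℕ∞) ν I) (hμ : ContDiffOn ℝ (⊤ : ℕ∞) μ I)
    (hνν : ∀ t ∈ I, mink (ν t) (ν t) = -1)
    (hμμ : ∀ t ∈ I, mink (μ t) (μ t) = 1)
    (hμν : ∀ t ∈ I, mink (μ t) (ν t) = 0)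
    (hderiv : ∀ t ∈ I, deriv a t = β t • μ t)
    (hx : ContDiffOn ℝ (⊤ : ℕ∞) x I) (hy : ContDiffOn ℝ (⊤ : ℕ∞) y I)
    (hxy : ∀ t ∈ I, x t ^ 2 - y t ^ 2 = r t ^ 2)
    (hβ : ∀ t ∈ I, β t * x t = -(r t * deriv r t)) :
    IsEnvelopePos I a r (fun t => a t + (x t • μ t + y t • ν t)) := by
  have hf : ContDiffOn ℝ (⊤ : ℕ∞) (fun t => a t + (x t • μ t + y t • ν t)) I :=
    ha.add ((hx.smul hμ).add (hy.smul hν))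
  have hc : ∀ t ∈ I, mink (a t + (x t • μ t + y t • ν t) - a t)
      (a t + (x t • μ t + y t • ν t) - a t) = r t ^ 2 := fun t ht => by
    rw [add_sub_cancel_left, (mink_frame (hνν t ht) (hμμ t ht) (hμν t ht) _ _).1, hxy t ht]
  refine ⟨hf, fun t ht => ⟨hc t ht, (tangency_iff hI ha hr hderiv hf hc ht).2 ?_⟩⟩
  rw [add_sub_cancel_left, (mink_frame (hνν t ht) (hμμ t ht) (hμν t ht) _ _).2.1, hβ t ht]

theorem unique_envelope_iff_spacelike
    (I : Set ℝ) (hIopen : IsOpen I) (hIconn : I.OrdConnected)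
    (a ν μ : ℝ → ℝ × ℝ) (β r : ℝ → ℝ)
    (hs0 : ContDiffOn ℝ (⊤ : ℕ∞) a I)
    (hs1 : ContDiffOn ℝ (⊤ : ℕ∞) ν I)
    (hs2 : ContDiffOn ℝ (⊤ : ℕ∞) μ I)
    (hs3 : ContDiffOn ℝ (⊤ : ℕ∞) β I)
    (hs4 : ContDiffOn ℝ (⊤ : ℕ∞) r I)
    (hνν : ∀ t ∈ I, mink (ν t) (ν t) = -1)
    (hμμ : ∀ t ∈ I, mink (μ t) (μ t) = 1)
    (hμν : ∀ t ∈ I, mink (μ t) (ν t) = 0)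
    (hderiv : ∀ t ∈ I, deriv a t = β t • μ t)
    (hrpos : ∀ t ∈ I, 0 < r t)
    (hex : ∃ f : ℝ → ℝ × ℝ, IsEnvelopePos I a r f) :
    (∃ g : I → ℝ × ℝ, EnvSetPos I a r = {g}) ↔
      I ⊆ closure {t | t ∈ I ∧ β t ≠ 0 ∧ |deriv r t| = |β t|} := by
  obtain ⟨f, hf⟩ := hex
  constructor
  · rintro ⟨g, hg⟩ t₀ ht₀
    have huniq : ∀ h, IsEnvelopePos I a r h → I.domRestrict h = g := fun h hh => by
      have hmem : I.domRestrict h ∈ EnvSetPos I a r := ⟨h, hh, rfl⟩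
      rwa [hg, mem_singleton_iff] at hmem
    obtain ⟨x, y, hx, hy, hxy⟩ :=
      hf.coord_eqs hIopen hs0 hs4 hs1 hs2 hνν hμμ hμν hderiv
    -- Any other admissible pair of coordinates has the same second coordinate `y`.
    have key : ∀ x' y' : ℝ → ℝ, ContDiffOn ℝ (⊤ : ℕ∞) x' I → ContDiffOn ℝ (⊤ : ℕ∞) y' I →
        (∀ t ∈ I, x' t ^ 2 - y' t ^ 2 = r t ^ 2) →
        (∀ t ∈ I, β t * x' t = -(r t * deriv r t)) → ∀ t ∈ I, y' t = y t := by
      intro x' y' hx' hy' h1 h2 t ht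
      have h3 : a t + (x' t • μ t + y' t • ν t) = f t := congrFun ((huniq _ (isEnvelopePos_of_coords hIopen hs0 hs4 hs1 hs2 hνν hμμ hμν
        hderiv hx' hy' h1 h2)).trans (huniq f hf).symm) ⟨t, ht⟩
      rw [(hxy t ht).1] at h3
      have h4 := congrArg (mink (ν t)) (add_left_cancel h3)
      rw [(mink_frame (hνν t ht) (hμμ t ht) (hμν t ht) _ _).2.2,
        (mink_frame (hνν t ht) (hμμ t ht) (hμν t ht) _ _).2.2] at h4
      linarith
    have hy0 : ∀ t ∈ I, y t = 0 := fun t ht => by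
      have := key x (fun t => -y t) hx hy.neg
        (fun t ht => by simpa using (hxy t ht).2.1) (fun t ht => (hxy t ht).2.2) t ht
      linarith
    have hxr : ∀ t ∈ I, x t ^ 2 = r t ^ 2 := fun t ht => by
      have := (hxy t ht).2.1
      rw [hy0 t ht] at this
      linarith
    have hrβ : ∀ t ∈ I, |deriv r t| = |β t| := fun t ht => by
      have h1 := congrArg abs (hxy t ht).2.2
      rw [abs_mul, abs_neg, abs_mul, (sq_eq_sq_iff_abs_eq_abs _ _).1 (hxr t ht), mul_comm] at h1
      exact (mul_left_cancel₀ (abs_pos.2 (hrpos t ht).ne').ne' h1).symm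
    by_contra hcl
    have hnhds : (closure {t | t ∈ I ∧ β t ≠ 0 ∧ |deriv r t| = |β t|})ᶜ ∈ nhds t₀ :=
      isClosed_closure.isOpen_compl.mem_nhds hcl
    obtain ⟨φ, hφs, -, hφ, -, hφ1⟩ := exists_contDiff_tsupport_subset (n := (⊤ : ℕ∞)) hnhds
    have hpos : ∀ t ∈ I, 0 < r t ^ 2 + φ t ^ 2 := fun t ht => by
      have := hrpos t ht
      positivity
    have hφI : ContDiffOn ℝ (⊤ : ℕ∞) φ I := hφ.contDiffOn
    -- The factor `x / r` is the locally constant sign of `x`.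
    have h1 := key (fun t => x t / r t * √(r t ^ 2 + φ t ^ 2)) φ
      ((hx.div hs4 fun t ht => (hrpos t ht).ne').mul
        (((hs4.pow 2).add (hφI.pow 2)).sqrt fun t ht => (hpos t ht).ne')) hφI
      (fun t ht => by
        have := (hrpos t ht).ne'
        rw [mul_pow, div_pow, hxr t ht, Real.sq_sqrt (hpos t ht).le]
        field_simp
        ring)
      (fun t ht => by
        by_cases hφt : φ t = 0
        · have := (hrpos t ht).ne'
          rw [← (hxy t ht).2.2, hφt]
          simp only [ne_eq, OfNat.ofNat_ne_zero, not_false_eq_true, zero_pow, add_zero]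
          rw [Real.sqrt_sq (hrpos t ht).le]
          field_simp
        · have hβ : β t = 0 := by
            by_contra hβ
            exact hφs (subset_tsupport _ hφt) (subset_closure ⟨ht, hβ, hrβ t ht⟩)
          have hr' := hrβ t ht
          rw [hβ, abs_zero, abs_eq_zero] at hr'
          simp [hβ, hr']) t₀ ht₀
    rw [hy0 t₀ ht₀, hφ1] at h1
    exact one_ne_zero h1
  · intro hdense
    refine ⟨I.domRestrict f, eq_singleton_iff_unique_mem.2 ⟨⟨f, hf, rfl⟩, ?_⟩⟩
    rintro _ ⟨h, hh, rfl⟩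
    obtain ⟨x, y, -, -, hxy⟩ := hf.coord_eqs hIopen hs0 hs4 hs1 hs2 hνν hμμ hμν hderiv
    obtain ⟨x', y', -, -, hxy'⟩ := hh.coord_eqs hIopen hs0 hs4 hs1 hs2 hνν hμμ hμν hderiv
    have hy0 : ∀ t ∈ I, |deriv r t| = |β t| → β t ≠ 0 → ∀ x y : ℝ, x ^ 2 - y ^ 2 = r t ^ 2 →
        β t * x = -(r t * deriv r t) → y = 0 := by
      intro t ht hrβ hβ x y h1 h2
      have h3 : deriv r t ^ 2 = β t ^ 2 := (sq_eq_sq_iff_abs_eq_abs _ _).2 hrβ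
      have h4 : β t ^ 2 * y ^ 2 = 0 := by
        linear_combination (-β t ^ 2) * h1 + (β t * x - r t * deriv r t) * h2 + r t ^ 2 * h3
      simpa [hβ] using h4
    have heq : EqOn h f {t | t ∈ I ∧ β t ≠ 0 ∧ |deriv r t| = |β t|} := by
      rintro t ⟨ht, hβ, hrβ⟩
      obtain ⟨e1, e2, e3⟩ := hxy t ht
      obtain ⟨e1', e2', e3'⟩ := hxy' t ht
      rw [e1, e1', hy0 t ht hrβ hβ _ _ e2 e3, hy0 t ht hrβ hβ _ _ e2' e3',
        mul_left_cancel₀ hβ (e3'.trans e3.symm)]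
    have := heq.of_subset_closure hh.1.continuousOn hf.1.continuousOn (fun t ht => ht.1) hdense
    exact domRestrict_eq_domRestrict_iff.2 this
end

section
/- Let I ⊆ ℝ be an open interval, a : I → ℝ² a smooth curve, and r : I → ℝ a smooth positive function. Let t₀ ∈ I, let (tᵢ) be a sequence in I \ {t₀} converging to t₀, and let (pᵢ) be a sequence in ℝ² converging to a point p₀ such that for every i, ⟨pᵢ - a(tᵢ), pᵢ - a(tᵢ)⟩ = r(tᵢ)² and ⟨pᵢ - a(t₀), pᵢ - a(t₀)⟩ = r(t₀)². Then ⟨a'(t₀), p₀ - a(t₀)⟩ = -r(t₀)·r'(t₀); equivalently, the unit vector ν₁ := (p₀ - a(t₀))/r(t₀) satisfies r'(t₀) = -⟨a'(t₀), ν₁⟩/1·(1/r(t₀))·r(t₀), i.e. r'(t₀) + ⟨a'(t₀), (p₀ - a(t₀))/r(t₀)⟩ = 0. -/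
/-!
Subtracting the equations of the pseudo-circles at `t i` and at `t₀` cancels the terms quadratic
in `p i`; each remaining difference of squares factors, so division by `t i - t₀ ≠ 0` gives an
identity between difference quotients of `a` and `r`. Its limit is twice the claimed equation.
-/

open Real Set

/-- Sequential form of the derivative: the difference quotients along any sequence that tends to
`t₀` while avoiding it converge to the derivative. -/
lemma tendsto_slope_seq {f : ℝ → ℝ} {f' t₀ : ℝ} (hf : HasDerivAt f f' t₀) {t : ℕ → ℝ}
    (htne : ∀ i, t i ≠ t₀) (htlim : Filter.Tendsto t Filter.atTop (nhds t₀)) :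
    Filter.Tendsto (fun i => (f (t i) - f t₀) / (t i - t₀)) Filter.atTop (nhds f') := by
  have h : Filter.Tendsto t Filter.atTop (nhdsWithin t₀ {t₀}ᶜ) :=
    tendsto_nhdsWithin_iff.2 ⟨htlim, Filter.Eventually.of_forall htne⟩
  refine ((hasDerivAt_iff_tendsto_slope.1 hf).comp h).congr fun i => ?_
  simp [slope_def_field]

theorem limit_of_circle_intersections
    (I : Set ℝ) (hIopen : IsOpen I) (hIconn : I.OrdConnected)
    (a : ℝ → ℝ × ℝ) (r : ℝ → ℝ)
    (hs0 : ContDiffOn ℝ (⊤ : ℕ∞) a I)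
    (hs1 : ContDiffOn ℝ (⊤ : ℕ∞) r I)
    (hrpos : ∀ t ∈ I, 0 < r t)
    (t₀ : ℝ) (ht₀ : t₀ ∈ I)
    (t : ℕ → ℝ) (htI : ∀ i, t i ∈ I) (htne : ∀ i, t i ≠ t₀)
    (htlim : Filter.Tendsto t Filter.atTop (nhds t₀))
    (p : ℕ → ℝ × ℝ) (p₀ : ℝ × ℝ)
    (hplim : Filter.Tendsto p Filter.atTop (nhds p₀))
    (hp₁ : ∀ i, mink (p i - a (t i)) (p i - a (t i)) = (r (t i)) ^ 2)
    (hp₂ : ∀ i, mink (p i - a t₀) (p i - a t₀) = (r t₀) ^ 2) :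
    mink (deriv a t₀) (p₀ - a t₀) = -(r t₀ * deriv r t₀) ∧
      deriv r t₀ + mink (deriv a t₀) ((r t₀)⁻¹ • (p₀ - a t₀)) = 0 := by
  have hn : I ∈ nhds t₀ := hIopen.mem_nhds ht₀
  have ha : HasDerivAt a (deriv a t₀) t₀ :=
    ((hs0.contDiffAt hn).differentiableAt (by simp)).hasDerivAt
  have hr : HasDerivAt r (deriv r t₀) t₀ :=
    ((hs1.contDiffAt hn).differentiableAt (by simp)).hasDerivAt
  have hx : HasDerivAt (fun s => (a s).1) (deriv a t₀).1 t₀ := ha.fst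
  have hy : HasDerivAt (fun s => (a s).2) (deriv a t₀).2 t₀ := ha.snd
  have hp1 := hplim.fst_nhds
  have hp2 := hplim.snd_nhds
  have hxt := hx.continuousAt.tendsto.comp htlim
  have hyt := hy.continuousAt.tendsto.comp htlim
  have hrt := hr.continuousAt.tendsto.comp htlim
  have hL := ((tendsto_slope_seq hx htne htlim).mul
      (((hp1.const_mul 2).sub hxt).sub_const (a t₀).1)).sub
    ((tendsto_slope_seq hy htne htlim).mul
      (((hp2.const_mul 2).sub hyt).sub_const (a t₀).2))
  have hR := (tendsto_slope_seq hr htne htlim).mul (hrt.add_const (r t₀))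
  have key := tendsto_nhds_unique (hL.congr fun i => ?_) hR
  · have h1 : mink (deriv a t₀) (p₀ - a t₀) = -(r t₀ * deriv r t₀) := by
      simp only [mink, Prod.fst_sub, Prod.snd_sub]
      linarith
    refine ⟨h1, ?_⟩
    have hr0 : r t₀ ≠ 0 := (hrpos t₀ ht₀).ne'
    have h2 : mink (deriv a t₀) ((r t₀)⁻¹ • (p₀ - a t₀))
        = (r t₀)⁻¹ * mink (deriv a t₀) (p₀ - a t₀) := by
      simp only [mink, Prod.smul_fst, Prod.smul_snd, smul_eq_mul]
      ring
    rw [h2, h1]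
    field_simp
    ring
  · have e1 := hp₁ i
    have e2 := hp₂ i
    have hne : t i - t₀ ≠ 0 := sub_ne_zero.2 (htne i)
    simp only [mink, Prod.fst_sub, Prod.snd_sub] at e1 e2
    simp only [Function.comp_apply]
    field_simp
    linarith
end
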